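/- arXiv:1907.00548 — 2 statements merged into one kernel-verified Lean document; each statement's English description precedes it below -/
import Mathlib

section
/- Let k, ℓ, g be positive integers with g ∈ G_k(ℓ), let p be a nonnegative integer, and let σ be a permutation of a finite set of cardinality ℓ·g·p with cycle type (ℓ)^{gp}. Then: (i) there exists at least one permutation τ with τ^k = σ and cycle type (gℓ)^p; and (ii) every permutation τ with τ^k = σ and cycle type (gℓ)^p is an even permutation if p·(ℓg+1) is even, and is an odd permutation if p·(ℓg+1) is odd. -/
open Finset

/-- Cycle lengths of a permutation, counting fixed points as cycles of length 1. -/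
def fullCycleType {α : Type*} [Fintype α] [DecidableEq α] (σ : Equiv.Perm α) : Multiset ℕ :=
  σ.cycleType + Multiset.replicate (Fintype.card α - σ.support.card) 1

/-- `G_k(ℓ) = {g ≥ 1 : gcd(gℓ, k) = g}`. -/
def Gset (k ℓ : ℕ) : Set ℕ := {g | 1 ≤ g ∧ Nat.gcd (g * ℓ) k = g}

/-!
Conjugacy classes of permutations are determined by the cycle lengths, and `f ^ k` cuts a cycle of
`f` of length `n` into `gcd n k` cycles of length `n / gcd n k`. For `n = g * ℓ` with
`gcd (g * ℓ) k = g`, a permutation with `p` cycles of length `g * ℓ` therefore has a `k`th power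
conjugate to `σ`, and the same conjugation carries that permutation to a `k`th root of `σ`. The sign
of any such root depends only on its cycle lengths.
-/

section

open Equiv.Perm Function

theorem minimalPeriod_eq_orderOf_cycleOf {β : Type*} (f : Equiv.Perm β) [DecidableRel f.SameCycle]
    (x : β) :
    minimalPeriod f x = orderOf (f.cycleOf x) := by
  refine Nat.dvd_right_iff_eq.1 fun j => ?_
  rw [← isPeriodicPt_iff_minimalPeriod_dvd, IsPeriodicPt, IsFixedPt, iterate_eq_pow,
    orderOf_dvd_iff_pow_eq_one, ← cycleOf_pow_apply_self]
  refine ⟨fun hx => Equiv.ext fun y => ?_, fun h => by rw [h, one_apply]⟩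
  by_cases hxy : f.SameCycle x y
  · obtain ⟨i, rfl⟩ := hxy
    rw [← cycleOf_zpow_apply_self, ← mul_apply, ((Commute.refl _).pow_left j).zpow_right i |>.eq,
      mul_apply, hx, one_apply]
  · rw [pow_apply_eq_self_of_apply_eq_self (cycleOf_apply_of_not_sameCycle hxy), one_apply]

variable {α : Type*} [Fintype α] [DecidableEq α] {f σ : Equiv.Perm α} {p n : ℕ}

theorem fullCycleType_eq_parts_partition (f : Equiv.Perm α) :
    fullCycleType f = f.partition.parts :=
  rfl

theorem sum_fullCycleType (f : Equiv.Perm α) : (fullCycleType f).sum = Fintype.card α :=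
  f.partition.parts_sum

theorem isConj_iff_fullCycleType_eq : IsConj f σ ↔ fullCycleType f = fullCycleType σ := by
  rw [partition_eq_of_isConj, Nat.Partition.ext_iff, fullCycleType_eq_parts_partition,
    fullCycleType_eq_parts_partition]

theorem exists_fullCycleType_eq_iff {m : Multiset ℕ} :
    (∃ f : Equiv.Perm α, fullCycleType f = m) ↔ m.sum = Fintype.card α ∧ ∀ a ∈ m, 0 < a := by
  constructor
  · rintro ⟨f, rfl⟩
    exact ⟨sum_fullCycleType f, fun _ ha => f.partition.parts_pos ha⟩
  · rintro ⟨hsum, hpos⟩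
    have ones : m.filter (¬2 ≤ ·) = Multiset.replicate (m.filter (¬2 ≤ ·)).card 1 := by
      refine Multiset.eq_replicate_card.2 fun a ha => ?_
      obtain ⟨ham, ha2⟩ := Multiset.mem_filter.1 ha
      have := hpos a ham
      omega
    have hm := Multiset.filter_add_not (2 ≤ ·) m
    have hcard : (m.filter (2 ≤ ·)).sum + (m.filter (¬2 ≤ ·)).card = Fintype.card α := by
      conv_rhs => rw [← hsum, ← hm, Multiset.sum_add, ones, Multiset.sum_replicate]
      simp only [smul_eq_mul, mul_one]
    obtain ⟨f, hf⟩ := (exists_with_cycleType_iff α (m := m.filter (2 ≤ ·))).2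
      ⟨by omega, fun _ ha => (Multiset.mem_filter.1 ha).2⟩
    refine ⟨f, ?_⟩
    rw [fullCycleType, ← sum_cycleType, hf, ← hcard, Nat.add_sub_cancel_left, ← ones, hm]

theorem exists_pow_eq_and_fullCycleType_eq {k : ℕ} (h : fullCycleType (f ^ k) = fullCycleType σ) :
    ∃ τ : Equiv.Perm α, τ ^ k = σ ∧ fullCycleType τ = fullCycleType f := by
  obtain ⟨c, hc⟩ := isConj_iff.1 (isConj_iff_fullCycleType_eq.2 h)
  refine ⟨c * f * c⁻¹, by rw [conj_pow, hc], ?_⟩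
  exact (isConj_iff_fullCycleType_eq.1 (isConj_iff.2 ⟨c, rfl⟩)).symm

theorem mem_cycleType_iff_exists_minimalPeriod {a : ℕ} :
    a ∈ f.cycleType ↔ ∃ x ∈ f.support, minimalPeriod f x = a := by
  have length_eq {x : α} (hx : x ∈ f.support) :
      #(f.cycleOf x).support = minimalPeriod f x := by
    rw [minimalPeriod_eq_orderOf_cycleOf, (isCycle_cycleOf f (mem_support.1 hx)).orderOf]
  rw [cycleType_def, Multiset.mem_map]
  constructor
  · rintro ⟨c, hc, rfl⟩
    obtain ⟨x, hx⟩ := (mem_cycleFactorsFinset_iff.1 hc).1.nonempty_support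
    have hxf := mem_cycleFactorsFinset_support_le hc hx
    exact ⟨x, hxf, by rw [cycle_is_cycleOf hx hc, comp_apply, length_eq hxf]⟩
  · rintro ⟨x, hx, rfl⟩
    exact ⟨f.cycleOf x, cycleOf_mem_cycleFactorsFinset_iff.2 hx, length_eq hx⟩

theorem mem_fullCycleType_iff_exists_minimalPeriod {a : ℕ} :
    a ∈ fullCycleType f ↔ ∃ x, minimalPeriod f x = a := by
  have fixed : a ∈ Multiset.replicate (Fintype.card α - #f.support) 1 ↔
      ∃ x ∉ f.support, minimalPeriod f x = a := by
    have period_one {x : α} (hx : x ∉ f.support) : minimalPeriod f x = 1 :=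
      minimalPeriod_eq_one_iff_isFixedPt.2 (notMem_support.1 hx)
    rw [Multiset.mem_replicate, ← card_compl, card_ne_zero]
    constructor
    · rintro ⟨⟨x, hx⟩, rfl⟩
      exact ⟨x, mem_compl.1 hx, period_one (mem_compl.1 hx)⟩
    · rintro ⟨x, hx, rfl⟩
      exact ⟨⟨x, mem_compl.2 hx⟩, period_one hx⟩
  rw [fullCycleType, Multiset.mem_add, mem_cycleType_iff_exists_minimalPeriod, fixed, ← exists_or]
  simp only [← or_and_right, em, true_and]

theorem fullCycleType_eq_replicate_iff (hn : 0 < n) :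
    fullCycleType f = Multiset.replicate p n ↔
      (∀ x, minimalPeriod f x = n) ∧ Fintype.card α = p * n := by
  have all_eq_iff : (∀ a ∈ fullCycleType f, a = n) ↔ ∀ x, minimalPeriod f x = n := by
    simp only [mem_fullCycleType_iff_exists_minimalPeriod, forall_exists_index,
      forall_apply_eq_imp_iff]
  rw [Multiset.eq_replicate, all_eq_iff, and_comm, and_congr_right_iff]
  intro hperiod
  have hreplicate := Multiset.eq_replicate_card.2 (all_eq_iff.2 hperiod)
  rw [← sum_fullCycleType f, hreplicate, Multiset.sum_replicate, Multiset.card_replicate,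
    smul_eq_mul, Nat.mul_left_inj hn.ne']

theorem fullCycleType_pow_of_eq_replicate (hn : 0 < n)
    (hf : fullCycleType f = Multiset.replicate p n) (k : ℕ) :
    fullCycleType (f ^ k) = Multiset.replicate (p * n.gcd k) (n / n.gcd k) := by
  obtain ⟨hperiod, hcard⟩ := (fullCycleType_eq_replicate_iff hn).1 hf
  have hdvd : n.gcd k ∣ n := Nat.gcd_dvd_left n k
  refine (fullCycleType_eq_replicate_iff (Nat.div_gcd_pos_of_pos_left k hn)).2 ⟨fun x => ?_, ?_⟩
  · rw [← iterate_eq_pow, minimalPeriod_iterate_eq_div_gcd' (f.injective.mem_periodicPts x),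
      hperiod]
  · rw [hcard, mul_assoc, Nat.mul_div_cancel' hdvd]

theorem sign_eq_neg_one_pow_sum_add_card_fullCycleType (f : Equiv.Perm α) :
    sign f = (-1) ^ ((fullCycleType f).sum + (fullCycleType f).card) := by
  simp only [sign_of_cycleType, fullCycleType, Multiset.sum_add, Multiset.card_add,
    Multiset.sum_replicate, Multiset.card_replicate, smul_eq_mul, mul_one]
  rw [add_add_add_comm, pow_add _ _ (_ + _), Even.neg_one_pow (Even.add_self _), mul_one]

theorem sign_of_fullCycleType_eq_replicate (hf : fullCycleType f = Multiset.replicate p n) :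
    sign f = (-1) ^ (p * (n + 1)) := by
  rw [sign_eq_neg_one_pow_sum_add_card_fullCycleType, hf, Multiset.sum_replicate,
    Multiset.card_replicate, smul_eq_mul, mul_add_one]

end

/-- **Proposition (signo-pari).** Let `k, ℓ, g` be positive integers with `g ∈ G_k(ℓ)`, let
`p ≥ 0`, and let `σ` be a permutation of a set of cardinality `ℓ·g·p` with cycle type
`(ℓ)^{gp}`. Then (i) `σ` has a `k`th root of cycle type `(gℓ)^p`, and (ii) every `k`th root
of `σ` of cycle type `(gℓ)^p` is even if `p(ℓg+1)` is even and odd if `p(ℓg+1)` is odd. -/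
theorem exists_root_and_sign_of_cycleType {α : Type*} [Fintype α] [DecidableEq α]
    (k ℓ g : ℕ) (hk : 0 < k) (hℓ : 0 < ℓ) (hg : 0 < g) (hgG : g ∈ Gset k ℓ) (p : ℕ)
    (hcard : Fintype.card α = ℓ * (g * p))
    (σ : Equiv.Perm α) (hσ : fullCycleType σ = Multiset.replicate (g * p) ℓ) :
    (∃ τ : Equiv.Perm α, τ ^ k = σ ∧ fullCycleType τ = Multiset.replicate p (g * ℓ)) ∧
    ∀ τ : Equiv.Perm α, τ ^ k = σ → fullCycleType τ = Multiset.replicate p (g * ℓ) →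
      (Even (p * (ℓ * g + 1)) → Equiv.Perm.sign τ = 1) ∧
      (Odd (p * (ℓ * g + 1)) → Equiv.Perm.sign τ = -1) := by
  obtain ⟨-, hgcd⟩ := hgG
  have hn : 0 < g * ℓ := Nat.mul_pos hg hℓ
  constructor
  · obtain ⟨f, hf⟩ : ∃ f : Equiv.Perm α, fullCycleType f = Multiset.replicate p (g * ℓ) := by
      refine exists_fullCycleType_eq_iff.2 ⟨?_, fun a ha => Multiset.eq_of_mem_replicate ha ▸ hn⟩
      rw [Multiset.sum_replicate, hcard, smul_eq_mul]
      ring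
    have hfk : fullCycleType (f ^ k) = fullCycleType σ := by
      rw [fullCycleType_pow_of_eq_replicate hn hf, hgcd, Nat.mul_div_cancel_left ℓ hg, mul_comm p,
        hσ]
    simpa only [hf] using exists_pow_eq_and_fullCycleType_eq hfk
  · intro τ _ hτ
    rw [sign_of_fullCycleType_eq_replicate hτ, mul_comm g ℓ]
    exact ⟨Even.neg_one_pow, Odd.neg_one_pow⟩
end

section
/- Fix positive integers k and ℓ, and a nonnegative integer c. For every permutation σ of a finite set of cardinality ℓ·c with cycle type (ℓ)^c, re_k(σ) − ro_k(σ) = ∑_{p} c! · ∏_{g ∈ G_k(ℓ)} (−1)^{p(g)(ℓg+1)} · ℓ^{p(g)(g−1)} / (g^{p(g)} · p(g)!), where the sum is over all functions p : G_k(ℓ) → ℕ with ∑_{g ∈ G_k(ℓ)} g·p(g) = c, and the equality is in ℚ. -/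
open Finset

/-- The number of even `k`th roots of `σ`. -/
def nEvenRoots {α : Type*} [Fintype α] [DecidableEq α] (k : ℕ) (σ : Equiv.Perm α) : ℕ :=
  (Finset.univ.filter fun τ : Equiv.Perm α => τ ^ k = σ ∧ Equiv.Perm.sign τ = 1).card

/-- The number of odd `k`th roots of `σ`. -/
def nOddRoots {α : Type*} [Fintype α] [DecidableEq α] (k : ℕ) (σ : Equiv.Perm α) : ℕ :=
  (Finset.univ.filter fun τ : Equiv.Perm α => τ ^ k = σ ∧ Equiv.Perm.sign τ = -1).card

/-!
A permutation all of whose cycles have length `ℓ` is conjugate to the shift `(a, i) ↦ (a + 1, i)` of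
`ZMod ℓ × β`, where `β` is its set of cycles. A `k`th root commutes with the shift, so it has the
form `(a, i) ↦ (a + v i, π i)`, and such a permutation is a root exactly when every cycle `q` of `π`
has length `m` dividing `k` and `(k / m) * ∑ x ∈ q, v x = 1` in `ZMod ℓ`. This is solvable exactly
when `m ∈ G_k(ℓ)`; it then leaves `ℓ ^ (m - 1)` choices of `v` on `q`, and since `∑ x ∈ q, v x` is a
unit of `ZMod ℓ`, the sign of the root is `∏ q, (-1) ^ (ℓ * m + 1)` whatever the choice. The signed
number of roots is therefore the sum over `π` of a product of weights depending only on the cycle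
lengths of `π`, which is evaluated by counting permutations with a given cycle type.
-/

open Equiv (Perm)
open scoped Nat

section Multisets

theorem filter_two_le_add_replicate_count_one {m : Multiset ℕ} (hm : ∀ a ∈ m, 0 < a) :
    m.filter (2 ≤ ·) + Multiset.replicate (m.count 1) 1 = m := by
  have small_eq_one : m.filter (¬2 ≤ ·) = m.filter (· = 1) :=
    Multiset.filter_congr fun a ha => by have := hm a ha; omega
  rw [← Multiset.filter_eq', ← small_eq_one, Multiset.filter_add_not]

theorem sum_filter_two_le_add_count_one {m : Multiset ℕ} (hm : ∀ a ∈ m, 0 < a) :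
    (m.filter (2 ≤ ·)).sum + m.count 1 = m.sum := by
  conv_rhs => rw [← filter_two_le_add_replicate_count_one hm]
  simp

theorem prod_filter_two_le {m : Multiset ℕ} (hm : ∀ a ∈ m, 0 < a) :
    (m.filter (2 ≤ ·)).prod = m.prod := by
  conv_rhs => rw [← filter_two_le_add_replicate_count_one hm]
  simp

theorem prod_factorial_count_filter_two_le {m : Multiset ℕ} (hm : ∀ a ∈ m, 0 < a) :
    (m.count 1)! * ∏ n ∈ (m.filter (2 ≤ ·)).toFinset, ((m.filter (2 ≤ ·)).count n)! =
      ∏ n ∈ m.toFinset, (m.count n)! := by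
  have subset_insert : m.toFinset ⊆ insert 1 (m.filter (2 ≤ ·)).toFinset := fun a ha => by
    have ha : a ∈ m := Multiset.mem_toFinset.1 ha
    have := hm a ha
    simp only [mem_insert, Multiset.mem_toFinset, Multiset.mem_filter, ha, true_and]
    omega
  rw [prod_subset subset_insert fun a _ ha => by
    rw [Multiset.count_eq_zero_of_notMem (mt Multiset.mem_toFinset.2 ha), Nat.factorial_zero],
    prod_insert (by simp)]
  congr 1
  refine prod_congr rfl fun n hn => ?_
  rw [Multiset.count_filter_of_pos (Multiset.mem_filter.1 (Multiset.mem_toFinset.1 hn)).2]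

variable {γ : Type*} {s : Set γ} [Fintype s]

/-- The multiset with elements in `s` in which each `g : s` has multiplicity `p g`. -/
def multisetOfCounts (p : s → ℕ) : Multiset γ :=
  ∑ g : s, Multiset.replicate (p g) (g : γ)

theorem mem_of_mem_multisetOfCounts {p : s → ℕ} {a : γ} (ha : a ∈ multisetOfCounts p) : a ∈ s := by
  obtain ⟨g, -, hg⟩ := Multiset.mem_sum.1 ha
  exact Multiset.eq_of_mem_replicate hg ▸ g.2

theorem sum_multisetOfCounts {s : Set ℕ} [Fintype s] (p : s → ℕ) :
    (multisetOfCounts p).sum = ∑ g : s, (g : ℕ) * p g := by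
  simp [multisetOfCounts, Multiset.sum_sum, mul_comm]

variable [DecidableEq γ]

theorem count_multisetOfCounts (p : s → ℕ) (g : s) :
    (multisetOfCounts p).count (g : γ) = p g := by
  simp [multisetOfCounts, Multiset.count_sum', Multiset.count_replicate, Subtype.coe_inj]

theorem eq_multisetOfCounts_iff {m : Multiset γ} {p : s → ℕ} :
    m = multisetOfCounts p ↔ (∀ a ∈ m, a ∈ s) ∧ (fun g : s => m.count (g : γ)) = p := by
  constructor
  · rintro rfl
    exact ⟨fun _ => mem_of_mem_multisetOfCounts, funext (count_multisetOfCounts p)⟩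
  · rintro ⟨hm, rfl⟩
    ext a
    by_cases ha : a ∈ s
    · exact (count_multisetOfCounts (fun g : s => m.count (g : γ)) ⟨a, ha⟩).symm
    · rw [Multiset.count_eq_zero_of_notMem (mt (hm a) ha),
        Multiset.count_eq_zero_of_notMem (mt mem_of_mem_multisetOfCounts ha)]

theorem prod_toFinset_multisetOfCounts {M : Type*} [CommMonoid M] (p : s → ℕ) (f : γ → ℕ → M)
    (hf : ∀ a, f a 0 = 1) :
    ∏ a ∈ (multisetOfCounts p).toFinset, f a ((multisetOfCounts p).count a) =
      ∏ g : s, f g (p g) := by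
  have toFinset_subset : (multisetOfCounts p).toFinset ⊆ s.toFinset := fun a ha =>
    Set.mem_toFinset.2 (mem_of_mem_multisetOfCounts (Multiset.mem_toFinset.1 ha))
  rw [prod_subset toFinset_subset fun a _ ha => by
    rw [Multiset.count_eq_zero_of_notMem (mt Multiset.mem_toFinset.2 ha), hf],
    prod_subtype s.toFinset (p := (· ∈ s)) (by simp)]
  exact prod_congr rfl fun g _ => by rw [count_multisetOfCounts]

end Multisets

section FullCycleType

variable {β : Type*} [Fintype β] [DecidableEq β]

theorem sum_fullCycleType_s7 (π : Perm β) : (fullCycleType π).sum = Fintype.card β :=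
  π.partition.parts_sum

theorem fullCycleType_eq_iff {π : Perm β} {m : Multiset ℕ} (hm : ∀ a ∈ m, 0 < a)
    (hsum : m.sum = Fintype.card β) :
    fullCycleType π = m ↔ π.cycleType = m.filter (2 ≤ ·) := by
  constructor
  · rintro rfl
    exact Perm.filter_parts_partition_eq_cycleType.symm
  · intro h
    have count_one : Fintype.card β - #π.support = m.count 1 := by
      rw [← Perm.sum_cycleType, h, ← hsum, ← sum_filter_two_le_add_count_one hm,
        Nat.add_sub_cancel_left]
    rw [fullCycleType, h, count_one, filter_two_le_add_replicate_count_one hm]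

theorem sign_eq_prod_fullCycleType (π : Perm β) :
    (Perm.sign π : ℤ) = ((fullCycleType π).map fun m => (-1 : ℤ) ^ (m + 1)).prod := by
  rw [fullCycleType, Multiset.map_add, Multiset.prod_add, Perm.sign_of_cycleType',
    ← Units.coeHom_apply, map_multiset_prod, Multiset.map_map]
  simp [Function.comp_def, pow_succ]

theorem card_fullCycleType_eq_mul {m : Multiset ℕ} (hm : ∀ a ∈ m, 0 < a)
    (hsum : m.sum = Fintype.card β) :
    #{π : Perm β | fullCycleType π = m} * (m.prod * ∏ n ∈ m.toFinset, (m.count n)!) =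
      (Fintype.card β)! := by
  have sum_filter := sum_filter_two_le_add_count_one hm
  have fixed_count : Fintype.card β - (m.filter (2 ≤ ·)).sum = m.count 1 := by omega
  have card_filter := Perm.card_of_cycleType_mul_eq β (m.filter (2 ≤ ·))
  rw [if_pos ⟨by omega, fun a ha => (Multiset.mem_filter.1 ha).2⟩, fixed_count,
    prod_filter_two_le hm] at card_filter
  rw [← card_filter, ← prod_factorial_count_filter_two_le hm]
  simp only [fullCycleType_eq_iff hm hsum]
  ring

variable {s : Set ℕ} [Fintype s]

theorem card_fullCycleType_eq_multisetOfCounts_mul (hs : ∀ g ∈ s, 0 < g) {p : s → ℕ}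
    (hp : ∑ g : s, (g : ℕ) * p g = Fintype.card β) :
    #{π : Perm β | fullCycleType π = multisetOfCounts p} *
      ∏ g : s, ((g : ℕ) ^ p g * (p g)!) = (Fintype.card β)! := by
  rw [← card_fullCycleType_eq_mul (fun a ha => hs a (mem_of_mem_multisetOfCounts ha))
    ((sum_multisetOfCounts p).trans hp), prod_mul_distrib, prod_multiset_count,
    prod_toFinset_multisetOfCounts p (fun n e => n ^ e) pow_zero,
    prod_toFinset_multisetOfCounts p (fun _ e => e !) fun _ => Nat.factorial_zero]

variable {K : Type*} [Field K] [CharZero K]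

theorem sum_prod_map_fullCycleType_of_eq (hs : ∀ g ∈ s, 0 < g) (w : ℕ → K) {p : s → ℕ}
    (hp : ∑ g : s, (g : ℕ) * p g = Fintype.card β) :
    ∑ π : Perm β with fullCycleType π = multisetOfCounts p, ((fullCycleType π).map w).prod =
      (Fintype.card β)! * ∏ g : s, w g ^ p g / ((g : K) ^ p g * (p g)!) := by
  have prod_weights : ((multisetOfCounts p).map w).prod = ∏ g : s, w g ^ p g := by
    rw [prod_multiset_map_count, prod_toFinset_multisetOfCounts p (fun n e => w n ^ e) (by simp)]
  have denom_ne_zero : ∏ g : s, ((g : K) ^ p g * (p g)!) ≠ 0 :=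
    prod_ne_zero_iff.2 fun g _ => mul_ne_zero
      (pow_ne_zero _ (Nat.cast_ne_zero.2 (hs g g.2).ne'))
      (Nat.cast_ne_zero.2 (p g).factorial_ne_zero)
  rw [sum_congr rfl fun π hπ => by rw [(mem_filter.1 hπ).2, prod_weights], sum_const, nsmul_eq_mul,
    ← card_fullCycleType_eq_multisetOfCounts_mul hs hp, prod_div_distrib]
  push_cast
  field_simp

theorem finite_setOf_sum_mul_eq (hs : ∀ g ∈ s, 0 < g) (c : ℕ) :
    {p : s → ℕ | ∑ g : s, (g : ℕ) * p g = c}.Finite := by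
  classical
  refine (Set.finite_Iic fun _ => c).subset fun p hp g => ?_
  calc p g ≤ g * p g := Nat.le_mul_of_pos_left _ (hs g g.2)
    _ ≤ ∑ g : s, (g : ℕ) * p g :=
      single_le_sum_of_canonicallyOrdered (f := fun g : s => (g : ℕ) * p g) (mem_univ g)
    _ = c := hp

theorem sum_prod_map_fullCycleType (hs : ∀ g ∈ s, 0 < g) {w : ℕ → K} (hw : ∀ n ∉ s, w n = 0) :
    ∑ π : Perm β, ((fullCycleType π).map w).prod =
      ∑ p ∈ (finite_setOf_sum_mul_eq hs (Fintype.card β)).toFinset,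
        (Fintype.card β)! * ∏ g : s, w g ^ p g / ((g : K) ^ p g * (p g)!) := by
  classical
  have mem_of_prod_ne_zero : ∀ π : Perm β, ((fullCycleType π).map w).prod ≠ 0 →
      ∀ n ∈ fullCycleType π, n ∈ s := fun π hπ n hn => by
    by_contra hns
    exact hπ (Multiset.prod_eq_zero (Multiset.mem_map.2 ⟨n, hn, hw n hns⟩))
  rw [← sum_filter_of_ne fun π _ => mem_of_prod_ne_zero π,
    ← sum_fiberwise_of_maps_to (g := fun π g => (fullCycleType π).count (g : ℕ))
      (t := (finite_setOf_sum_mul_eq hs (Fintype.card β)).toFinset)]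
  · refine sum_congr rfl fun p hp => ?_
    have hp : ∑ g : s, (g : ℕ) * p g = Fintype.card β := by
      simpa using hp
    rw [← sum_prod_map_fullCycleType_of_eq hs w hp, filter_filter]
    simp only [eq_multisetOfCounts_iff]
  · intro π hπ
    rw [Set.Finite.mem_toFinset, Set.mem_ofPred_eq, ← sum_multisetOfCounts,
      ← eq_multisetOfCounts_iff.2 ⟨(mem_filter.1 hπ).2, rfl⟩, sum_fullCycleType_s7]

theorem sum_prod_map_fullCycleType_eq_finsum {s : Set ℕ} (hfin : s.Finite) (hs : ∀ g ∈ s, 0 < g)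
    {w : ℕ → K} (hw : ∀ n ∉ s, w n = 0) :
    ∑ π : Perm β, ((fullCycleType π).map w).prod =
      ∑ᶠ p : {p : s → ℕ // ∑ᶠ g : s, (g : ℕ) * p g = Fintype.card β},
        ((Fintype.card β)! : K) * ∏ᶠ g : s, w g ^ p.1 g / ((g : K) ^ p.1 g * (p.1 g)!) := by
  have := hfin.fintype
  rw [sum_prod_map_fullCycleType hs hw, ← finsum_mem_eq_finite_toFinset_sum,
    finsum_subtype_eq_finsum_cond
      (f := fun p : s → ℕ => ((Fintype.card β)! : K) * ∏ᶠ g : s, w g ^ p g / (g ^ p g * (p g)!))]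
  simp only [finsum_eq_sum_of_fintype, finprod_eq_prod_of_fintype, Set.mem_ofPred_eq]

end FullCycleType

section WreathPerm

variable {A β : Type*} [AddCommGroup A]

/-- The permutation `(a, i) ↦ (a + v i, π i)` of `A × β`, that is, the element of the wreath product
of `A` by `Perm β` with components `π` and `v`. The element `wreathPerm 1 1` over `ZMod ℓ` is the
model for a permutation all of whose cycles have length `ℓ`. -/
def wreathPerm (π : Perm β) (v : β → A) : Perm (A × β) :=
  Equiv.prodCongrRight (fun _ => π) * Equiv.prodCongrLeft fun i => Equiv.addRight (v i)

theorem wreathPerm_apply (π : Perm β) (v : β → A) (a : A) (i : β) :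
    wreathPerm π v (a, i) = (a + v i, π i) := rfl

theorem wreathPerm_pow (π : Perm β) (v : β → A) (k : ℕ) :
    wreathPerm π v ^ k = wreathPerm (π ^ k) fun i => ∑ j ∈ range k, v ((π ^ j) i) := by
  induction k with
  | zero => ext1 ⟨a, i⟩; simp [wreathPerm_apply]
  | succ k ih =>
    ext1 ⟨a, i⟩
    rw [pow_succ', ih, Perm.mul_apply, wreathPerm_apply, wreathPerm_apply, wreathPerm_apply,
      sum_range_succ, pow_succ' π, Perm.mul_apply, add_assoc]

theorem wreathPerm_inj {π ρ : Perm β} {v u : β → A} :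
    wreathPerm π v = wreathPerm ρ u ↔ π = ρ ∧ v = u := by
  refine ⟨fun h => ?_, by rintro ⟨rfl, rfl⟩; rfl⟩
  have apply_zero : ∀ i, v i = u i ∧ π i = ρ i := fun i => by
    simpa [wreathPerm_apply] using Equiv.congr_fun h (0, i)
  exact ⟨Equiv.ext fun i => (apply_zero i).2, funext fun i => (apply_zero i).1⟩

theorem sign_wreathPerm [Fintype A] [DecidableEq A] [Fintype β] [DecidableEq β] (π : Perm β)
    (v : β → A) :
    Perm.sign (wreathPerm π v) =
      Perm.sign π ^ Fintype.card A * ∏ i, Perm.sign (Equiv.addRight (v i)) := by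
  rw [wreathPerm, Perm.sign_mul, Perm.sign_prodCongrRight, Perm.sign_prodCongrLeft, prod_const,
    card_univ]

theorem exists_eq_wreathPerm_of_translation_equivariant {τ : Perm (A × β)}
    (hτ : ∀ a b i, τ (a + b, i) = ((τ (a, i)).1 + b, (τ (a, i)).2)) :
    ∃ π v, τ = wreathPerm π v := by
  have τ_eq : ∀ a i, τ (a, i) = (a + (τ (0, i)).1, (τ (0, i)).2) := fun a i => by
    rw [add_comm, ← hτ, zero_add]
  have base_bijective : Function.Bijective fun i => (τ (0, i)).2 := by
    constructor
    · intro i j hij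
      have : τ ((τ (0, j)).1 - (τ (0, i)).1, i) = τ (0, j) := by
        rw [τ_eq, sub_add_cancel]
        exact Prod.ext rfl hij
      exact congrArg Prod.snd (τ.injective this)
    · intro j
      obtain ⟨⟨a, i⟩, hai⟩ := τ.surjective (0, j)
      rw [τ_eq] at hai
      exact ⟨i, congrArg Prod.snd hai⟩
  exact ⟨Equiv.ofBijective _ base_bijective, fun i => (τ (0, i)).1,
    Equiv.ext fun ⟨a, i⟩ => τ_eq a i⟩

theorem exists_eq_wreathPerm_of_commute {ℓ : ℕ} [NeZero ℓ] {τ : Perm (ZMod ℓ × β)}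
    (hτ : Commute τ (wreathPerm 1 1)) : ∃ π v, τ = wreathPerm π v := by
  refine exists_eq_wreathPerm_of_translation_equivariant fun a b i => ?_
  have shift_pow : wreathPerm 1 1 ^ b.val = wreathPerm (1 : Perm β) fun _ => b := by
    simp [wreathPerm_pow]
  have commute_shift := (shift_pow ▸ hτ.pow_right b.val).eq
  exact Equiv.congr_fun commute_shift (a, i)

end WreathPerm

section SignAddRight

theorem sign_addRight_sum {A ι : Type*} [AddCommGroup A] [Fintype A] [DecidableEq A] (s : Finset ι)
    (f : ι → A) :
    Perm.sign (Equiv.addRight (∑ i ∈ s, f i)) = ∏ i ∈ s, Perm.sign (Equiv.addRight (f i)) := by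
  induction s using Finset.cons_induction with
  | empty => simp
  | cons i s hi ih =>
    have addRight_add : ∀ a b : A, Equiv.addRight (a + b) = Equiv.addRight b * Equiv.addRight a :=
      fun a b => Equiv.ext fun x => (add_assoc x a b).symm
    rw [sum_cons, prod_cons, addRight_add, Perm.sign_mul, ih, mul_comm]

theorem sign_addRight_of_isUnit {R : Type*} [Ring R] [Fintype R] [DecidableEq R] {a : R}
    (ha : IsUnit a) : Perm.sign (Equiv.addRight a) = Perm.sign (Equiv.addRight (1 : R)) := by
  obtain ⟨u, rfl⟩ := ha
  exact (Perm.sign_eq_sign_of_equiv _ _ u.mulLeft fun x => by simp [mul_add]).symm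

theorem sign_addRight_one_zmod (ℓ : ℕ) [NeZero ℓ] :
    Perm.sign (Equiv.addRight (1 : ZMod ℓ)) = (-1) ^ (ℓ + 1) := by
  obtain _ | n := ℓ
  · exact absurd rfl (NeZero.ne 0)
  · have sign_eq : Perm.sign (Equiv.addRight (1 : ZMod (n + 1))) = Perm.sign (finRotate (n + 1)) :=
      Perm.sign_eq_sign_of_equiv _ _ (Equiv.refl (Fin (n + 1))) fun x => (finRotate_apply x).symm
    rw [sign_eq, sign_finRotate, Nat.add_sub_cancel, pow_add, pow_add]
    simp

end SignAddRight

section CycleClass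

variable {β : Type*}

/-- The set of cycles of `π`, fixed points included, as the quotient of `β` by the relation of lying
on the same cycle. -/
abbrev CycleClass (π : Perm β) : Type _ := Quotient (Perm.SameCycle.setoid π)

/-- The cycle of `π` through `x`. -/
abbrev CycleClass.mk (π : Perm β) (x : β) : CycleClass π := Quotient.mk _ x

variable [Fintype β] [DecidableEq β] {π : Perm β}

instance : DecidableEq (CycleClass π) :=
  @Quotient.decidableEq _ _ (inferInstanceAs (DecidableRel π.SameCycle))

instance : Fintype (CycleClass π) :=
  @Quotient.fintype _ _ _ (inferInstanceAs (DecidableRel π.SameCycle))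

/-- The finite set of points on a cycle; its cardinality is the length of the cycle. -/
def CycleClass.points (q : CycleClass π) : Finset β := {x | CycleClass.mk π x = q}

theorem CycleClass.mem_points {q : CycleClass π} {x : β} :
    x ∈ q.points ↔ CycleClass.mk π x = q := by
  simp [CycleClass.points]

theorem CycleClass.mem_points_mk (x : β) : x ∈ (CycleClass.mk π x).points :=
  CycleClass.mem_points.2 rfl

theorem CycleClass.out_mem_points (q : CycleClass π) : q.out ∈ q.points :=
  CycleClass.mem_points.2 q.out_eq

theorem CycleClass.card_points_pos (q : CycleClass π) : 0 < #q.points :=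
  card_pos.2 ⟨_, q.out_mem_points⟩

theorem CycleClass.mem_points_iff_sameCycle {q : CycleClass π} {x y : β} (hx : x ∈ q.points) :
    y ∈ q.points ↔ π.SameCycle x y := by
  obtain rfl := CycleClass.mem_points.1 hx
  exact CycleClass.mem_points.trans (Quotient.eq.trans Perm.sameCycle_comm)

theorem CycleClass.isCycleOn_points (q : CycleClass π) : π.IsCycleOn (q.points : Set β) :=
  ⟨π.bijOn fun x => by simp [mem_points_iff_sameCycle q.out_mem_points], fun _ hx _ hy =>
    (mem_points_iff_sameCycle hx).1 hy⟩

theorem CycleClass.sum_card_points (π : Perm β) :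
    ∑ q : CycleClass π, #q.points = Fintype.card β :=
  (card_eq_sum_card_fiberwise fun _ _ => mem_univ _).symm

theorem CycleClass.two_le_card_points_iff {q : CycleClass π} {x : β} (hx : x ∈ q.points) :
    2 ≤ #q.points ↔ π x ≠ x := by
  have fixed_iff : π x = x ↔ #q.points = 1 := by
    simpa using q.isCycleOn_points.pow_apply_eq hx (n := 1)
  have := q.card_points_pos
  rw [Ne, fixed_iff]
  omega

theorem CycleClass.support_cycleOf {q : CycleClass π} {x : β} (hx : x ∈ q.points)
    (hπ : π x ≠ x) : (π.cycleOf x).support = q.points := by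
  ext y
  rw [Perm.mem_support_cycleOf_iff' hπ, mem_points_iff_sameCycle hx]

theorem cycleType_eq_map_card_points (π : Perm β) :
    π.cycleType = ({q : CycleClass π | 2 ≤ #q.points} : Finset _).val.map fun q => #q.points := by
  have two_le_iff : ∀ q : CycleClass π, 2 ≤ #q.points ↔ π q.out ≠ q.out := fun q =>
    CycleClass.two_le_card_points_iff q.out_mem_points
  rw [Perm.cycleType_def]
  refine (Multiset.map_eq_map_of_bij_of_nodup _ _ (nodup _) (nodup _)
    (fun q _ => π.cycleOf q.out) ?mapsTo ?injective ?surjective ?card_eq).symm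
  case mapsTo =>
    intro q hq
    exact Perm.cycleOf_mem_cycleFactorsFinset_iff.2
      (Perm.mem_support.2 ((two_le_iff q).1 (mem_filter.1 hq).2))
  case injective =>
    intro q hq r hr h
    have hq := (two_le_iff q).1 (mem_filter.1 hq).2
    have hr := (two_le_iff r).1 (mem_filter.1 hr).2
    have points_eq : q.points = r.points := by
      rw [← CycleClass.support_cycleOf q.out_mem_points hq,
        ← CycleClass.support_cycleOf r.out_mem_points hr, h]
    rw [← CycleClass.mem_points.1 q.out_mem_points]
    exact CycleClass.mem_points.1 (points_eq ▸ q.out_mem_points)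
  case surjective =>
    intro f hf
    obtain ⟨x, hx⟩ := (Perm.mem_cycleFactorsFinset_iff.1 hf).1.nonempty_support
    have x_moved : π x ≠ x :=
      Perm.mem_support.1 (Perm.mem_cycleFactorsFinset_support_le hf hx)
    have x_mem : x ∈ (CycleClass.mk π x).points := CycleClass.mem_points_mk x
    have same : π.SameCycle x (CycleClass.mk π x).out :=
      (CycleClass.mem_points_iff_sameCycle x_mem).1 (CycleClass.out_mem_points _)
    exact ⟨CycleClass.mk π x,
      mem_filter.2 ⟨mem_univ _, (CycleClass.two_le_card_points_iff x_mem).2 x_moved⟩,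
      by rw [← same.cycleOf_eq, Perm.cycle_is_cycleOf hx hf]⟩
  case card_eq =>
    intro q hq
    rw [Function.comp_apply,
      CycleClass.support_cycleOf q.out_mem_points ((two_le_iff q).1 (mem_filter.1 hq).2)]

theorem fullCycleType_eq_map_card_points (π : Perm β) :
    fullCycleType π = (univ : Finset (CycleClass π)).val.map fun q => #q.points := by
  have parts_pos : ∀ n ∈ (univ : Finset (CycleClass π)).val.map fun q => #q.points, 0 < n := by
    simpa using CycleClass.card_points_pos (π := π)
  rw [fullCycleType_eq_iff parts_pos (CycleClass.sum_card_points π), cycleType_eq_map_card_points,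
    Multiset.filter_map]
  rfl

theorem prod_map_fullCycleType {M : Type*} [CommMonoid M] (π : Perm β) (w : ℕ → M) :
    ((fullCycleType π).map w).prod = ∏ q : CycleClass π, w #q.points := by
  rw [fullCycleType_eq_map_card_points, Multiset.map_map]
  rfl

theorem card_cycleClass_of_fullCycleType_eq_replicate {ℓ c : ℕ}
    (hπ : fullCycleType π = Multiset.replicate c ℓ) : Fintype.card (CycleClass π) = c := by
  simpa [fullCycleType_eq_map_card_points] using congrArg Multiset.card hπ

theorem card_points_of_fullCycleType_eq_replicate {ℓ c : ℕ}
    (hπ : fullCycleType π = Multiset.replicate c ℓ) (q : CycleClass π) : #q.points = ℓ := by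
  refine Multiset.eq_of_mem_replicate (n := c) (hπ ▸ ?_)
  rw [fullCycleType_eq_map_card_points]
  exact Multiset.mem_map_of_mem _ (mem_univ q)

theorem CycleClass.sum_range_pow_apply {M : Type*} [AddCommMonoid M] {q : CycleClass π} {x : β}
    (hx : x ∈ q.points) (v : β → M) (n : ℕ) :
    ∑ j ∈ range (#q.points * n), v ((π ^ j) x) = n • ∑ y ∈ q.points, v y := by
  have hcycle := q.isCycleOn_points
  have sum_period : ∑ j ∈ range #q.points, v ((π ^ j) x) = ∑ y ∈ q.points, v y := by
    refine sum_nbij (fun j => (π ^ j) x) (fun j _ => ?_) (fun i hi j hj h => ?_) (fun y hy => ?_)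
      fun _ _ => rfl
    · exact (mem_points_iff_sameCycle hx).2 (Perm.sameCycle_pow_right.2 .rfl)
    · exact ((hcycle.pow_apply_eq_pow_apply hx).1 h).eq_of_lt_of_lt
        (mem_range.1 hi) (mem_range.1 hj)
    · obtain ⟨j, hj, rfl⟩ := hcycle.exists_pow_eq hx hy
      exact ⟨j, mem_coe.2 (mem_range.2 hj), rfl⟩
  induction n with
  | zero => simp
  | succ n ih =>
    have pow_add_period : ∀ j, (π ^ (#q.points * n + j)) x = (π ^ j) x := fun j =>
      (hcycle.pow_apply_eq_pow_apply hx).2 (by simp [Nat.ModEq])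
    simp only [mul_add_one, sum_range_add, ih, pow_add_period, sum_period, succ_nsmul]

theorem exists_permCongr_eq_wreathPerm_one {ℓ : ℕ} [NeZero ℓ] (σ : Perm β)
    (hσ : ∀ q : CycleClass σ, #q.points = ℓ) :
    ∃ e : β ≃ ZMod ℓ × CycleClass σ, e.permCongr σ = wreathPerm 1 1 := by
  have pow_eq_iff : ∀ (q : CycleClass σ) (m n : ℕ),
      (σ ^ m) q.out = (σ ^ n) q.out ↔ (m : ZMod ℓ) = n := fun q m n => by
    rw [q.isCycleOn_points.pow_apply_eq_pow_apply q.out_mem_points, hσ,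
      ZMod.natCast_eq_natCast_iff]
  let point : ZMod ℓ × CycleClass σ → β := fun p => (σ ^ p.1.val) p.2.out
  have point_mem : ∀ p, point p ∈ p.2.points := fun p =>
    (CycleClass.mem_points_iff_sameCycle p.2.out_mem_points).2 (Perm.sameCycle_pow_right.2 .rfl)
  have point_bijective : Function.Bijective point := by
    constructor
    · rintro ⟨a, q⟩ ⟨b, r⟩ h
      obtain rfl : q = r := (CycleClass.mem_points.1 (point_mem (a, q))).symm.trans
        ((congrArg _ h).trans (CycleClass.mem_points.1 (point_mem (b, r))))
      simpa using (pow_eq_iff q a.val b.val).1 h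
    · intro x
      obtain ⟨n, -, hn⟩ := (CycleClass.isCycleOn_points _).exists_pow_eq
        (CycleClass.out_mem_points (CycleClass.mk σ x)) (CycleClass.mem_points_mk x)
      exact ⟨(n, CycleClass.mk σ x), ((pow_eq_iff _ _ _).2 (by simp)).trans hn⟩
  have apply_point : ∀ a q, σ (point (a, q)) = point (a + 1, q) := fun a q => by
    rw [← Perm.mul_apply, ← pow_succ', pow_eq_iff]
    simp
  refine ⟨(Equiv.ofBijective point point_bijective).symm, Equiv.ext fun ⟨a, q⟩ => ?_⟩
  rw [Equiv.permCongr_apply, Equiv.symm_symm, Equiv.symm_apply_eq]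
  exact apply_point a q

end CycleClass

section FiberSums

variable {A ι Q : Type*} [Fintype ι] [DecidableEq Q] {f : ι → Q}

theorem exists_fiber_sum_eq [AddCommMonoid A] (hf : Function.Surjective f) (t : Q → A) :
    ∃ v : ι → A, ∀ q, ∑ x with f x = q, v x = t q := by
  classical
  let g := Function.surjInv hf
  refine ⟨fun x => if x = g (f x) then t (f x) else 0, fun q => ?_⟩
  calc ∑ x with f x = q, (if x = g (f x) then t (f x) else 0)
      = ∑ x with f x = q, if x = g q then t q else 0 :=
        sum_congr rfl fun x hx => by rw [(mem_filter.1 hx).2]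
    _ = t q := by simp [g, Function.surjInv_eq hf]

theorem card_filter_fiber_sum_eq [AddCommGroup A] [Fintype A] [DecidableEq A] [DecidableEq ι]
    [Fintype Q] (hf : Function.Surjective f) (t : Q → A) :
    #{v : ι → A | ∀ q, ∑ x with f x = q, v x = t q} =
      ∏ q, Fintype.card A ^ (#{x | f x = q} - 1) := by
  let fiberSum : (ι → A) →+ Q → A :=
    { toFun := fun v q => ∑ x with f x = q, v x
      map_zero' := by ext; simp
      map_add' := fun u v => by ext; simp [sum_add_distrib] }
  have fiberSum_surjective : Function.Surjective fiberSum := fun u =>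
    (exists_fiber_sum_eq hf u).imp fun _ hv => funext hv
  have card_fiber_eq : ∀ u, #{v | fiberSum v = u} = #{v | fiberSum v = t} := fun u =>
    AddMonoidHom.card_fiber_eq_of_mem_range fiberSum (fiberSum_surjective u) (fiberSum_surjective t)
  have card_pow_mul : Fintype.card A ^ Fintype.card Q * #{v | fiberSum v = t} =
      Fintype.card A ^ Fintype.card Q * ∏ q, Fintype.card A ^ (#{x | f x = q} - 1) := by
    calc Fintype.card A ^ Fintype.card Q * #{v | fiberSum v = t}
        = ∑ u, #{v | fiberSum v = u} := by simp [card_fiber_eq]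
      _ = Fintype.card A ^ Fintype.card ι := by
          rw [← card_eq_sum_card_fiberwise fun _ _ => mem_univ _, card_univ, Fintype.card_fun]
      _ = ∏ q, Fintype.card A ^ #{x | f x = q} := by
          rw [prod_pow_eq_pow_sum, ← card_eq_sum_card_fiberwise fun _ _ => mem_univ _, card_univ]
      _ = ∏ q, Fintype.card A * Fintype.card A ^ (#{x | f x = q} - 1) :=
          prod_congr rfl fun q _ => by
            have : #{x | f x = q} ≠ 0 := card_ne_zero.2 ((hf q).imp fun x hx => by simp [hx])
            rw [mul_pow_sub_one this]
      _ = _ := by simp [prod_mul_distrib]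
  simpa [fiberSum, funext_iff] using
    Nat.eq_of_mul_eq_mul_left (pow_pos Fintype.card_pos _) card_pow_mul

end FiberSums

section Roots

theorem wreathPerm_pow_eq_iff {A β : Type*} [AddCommGroup A] [Fintype β] [DecidableEq β]
    {π : Perm β} {v : β → A} {k : ℕ} {a : A} :
    wreathPerm π v ^ k = wreathPerm 1 (fun _ => a) ↔
      ∀ q : CycleClass π, #q.points ∣ k ∧ (k / #q.points) • ∑ x ∈ q.points, v x = a := by
  have pow_apply_eq_iff : ∀ {q : CycleClass π} {x}, x ∈ q.points →
      ((π ^ k) x = x ↔ #q.points ∣ k) := fun hx => (CycleClass.isCycleOn_points _).pow_apply_eq hx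
  have sum_eq : ∀ {q : CycleClass π} {x}, x ∈ q.points → #q.points ∣ k →
      ∑ j ∈ range k, v ((π ^ j) x) = (k / #q.points) • ∑ y ∈ q.points, v y := fun hx hdvd => by
    rw [← CycleClass.sum_range_pow_apply hx, Nat.mul_div_cancel' hdvd]
  rw [wreathPerm_pow, wreathPerm_inj]
  constructor
  · rintro ⟨pow_eq_one, sum_eq_a⟩ q
    have hdvd := (pow_apply_eq_iff q.out_mem_points).1 (Equiv.congr_fun pow_eq_one _)
    exact ⟨hdvd, (sum_eq q.out_mem_points hdvd).symm.trans (congrFun sum_eq_a _)⟩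
  · intro h
    exact ⟨Equiv.ext fun x => (pow_apply_eq_iff (CycleClass.mem_points_mk x)).2 (h _).1,
      funext fun x => (sum_eq (CycleClass.mem_points_mk x) (h _).1).trans (h _).2⟩

theorem mem_Gset_iff {k ℓ m : ℕ} (hm : 0 < m) :
    m ∈ Gset k ℓ ↔ m ∣ k ∧ Nat.Coprime (k / m) ℓ := by
  have gcd_mul_left_eq : ∀ d, Nat.gcd (m * ℓ) (m * d) = m ↔ Nat.Coprime d ℓ := fun d => by
    rw [Nat.gcd_mul_left, Nat.mul_eq_left hm.ne', Nat.gcd_comm, Nat.Coprime]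
  constructor
  · rintro ⟨-, hgcd⟩
    obtain ⟨d, rfl⟩ : m ∣ k := hgcd ▸ Nat.gcd_dvd_right _ _
    exact ⟨dvd_mul_right m d, by rwa [Nat.mul_div_cancel_left _ hm, ← gcd_mul_left_eq]⟩
  · rintro ⟨⟨d, rfl⟩, hcop⟩
    exact ⟨hm, (gcd_mul_left_eq d).2 (by rwa [Nat.mul_div_cancel_left _ hm] at hcop)⟩

theorem finite_Gset {k : ℕ} (hk : 0 < k) (ℓ : ℕ) : (Gset k ℓ).Finite :=
  (Set.finite_Iic k).subset fun _ hg => hg.2 ▸ Nat.gcd_le_right _ hk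

/-- The contribution of a cycle of length `m` of `π` to the signed number of `k`th roots
`wreathPerm π v` of the shift `wreathPerm 1 1` on `ZMod ℓ × β`. -/
noncomputable def cycleWeight (k ℓ : ℕ) : ℕ → ℤ :=
  (Gset k ℓ).indicator fun m => (-1) ^ (ℓ * m + 1) * ℓ ^ (m - 1)

theorem cycleWeight_of_mem {k ℓ m : ℕ} (hm : m ∈ Gset k ℓ) :
    cycleWeight k ℓ m = (-1) ^ (ℓ * m + 1) * ℓ ^ (m - 1) :=
  Set.indicator_of_mem hm _

theorem cycleWeight_of_notMem {k ℓ m : ℕ} (hm : m ∉ Gset k ℓ) : cycleWeight k ℓ m = 0 :=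
  Set.indicator_of_notMem hm _

variable {β : Type*} [Fintype β] [DecidableEq β] {k ℓ : ℕ} {π : Perm β}

theorem isUnit_sum_points_of_wreathPerm_pow_eq {v : β → ZMod ℓ}
    (hv : wreathPerm π v ^ k = wreathPerm 1 1) (q : CycleClass π) :
    IsUnit (∑ x ∈ q.points, v x) := by
  have hq := (wreathPerm_pow_eq_iff.1 hv q).2
  rw [nsmul_eq_mul] at hq
  exact .of_mul_eq_one_right _ hq

theorem card_points_mem_Gset_of_wreathPerm_pow_eq {v : β → ZMod ℓ}
    (hv : wreathPerm π v ^ k = wreathPerm 1 1) (q : CycleClass π) : #q.points ∈ Gset k ℓ := by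
  obtain ⟨hdvd, hq⟩ := wreathPerm_pow_eq_iff.1 hv q
  rw [nsmul_eq_mul] at hq
  exact (mem_Gset_iff q.card_points_pos).2
    ⟨hdvd, (ZMod.isUnit_iff_coprime _ _).1 (.of_mul_eq_one _ hq)⟩

variable [NeZero ℓ]

theorem sign_wreathPerm_of_isUnit {v : β → ZMod ℓ}
    (hv : ∀ q : CycleClass π, IsUnit (∑ x ∈ q.points, v x)) :
    (Perm.sign (wreathPerm π v) : ℤ) = ∏ q : CycleClass π, (-1) ^ (ℓ * #q.points + 1) := by
  have prod_sign_translations :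
      ∏ x, Perm.sign (Equiv.addRight (v x)) = ∏ _q : CycleClass π, (-1) ^ (ℓ + 1) := by
    rw [← prod_fiberwise univ (CycleClass.mk π)]
    refine prod_congr rfl fun q _ => ?_
    rw [← sign_addRight_one_zmod, ← sign_addRight_of_isUnit (hv q), sign_addRight_sum]
    rfl
  rw [sign_wreathPerm, prod_sign_translations, ZMod.card]
  push_cast
  rw [sign_eq_prod_fullCycleType, prod_map_fullCycleType, ← prod_pow, ← prod_mul_distrib]
  refine prod_congr rfl fun q _ => ?_
  have parity : (#q.points + 1) * ℓ + (ℓ + 1) = ℓ * #q.points + 1 + 2 * ℓ := by ring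
  rw [← pow_mul, ← pow_add, parity, pow_add, pow_mul _ 2, neg_one_sq, one_pow, mul_one]

theorem card_wreathPerm_pow_eq (hπ : ∀ q : CycleClass π, #q.points ∈ Gset k ℓ) :
    #{v : β → ZMod ℓ | wreathPerm π v ^ k = wreathPerm 1 1} =
      ∏ q : CycleClass π, ℓ ^ (#q.points - 1) := by
  have pow_eq_iff : ∀ v : β → ZMod ℓ, wreathPerm π v ^ k = wreathPerm 1 1 ↔
      ∀ q : CycleClass π, ∑ x with CycleClass.mk π x = q, v x =
        ((k / #q.points : ℕ) : ZMod ℓ)⁻¹ := fun v => by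
    refine (wreathPerm_pow_eq_iff (a := 1)).trans (forall_congr' fun q => ?_)
    obtain ⟨hdvd, hcop⟩ := (mem_Gset_iff q.card_points_pos).1 (hπ q)
    have hunit := ZMod.coe_mul_inv_eq_one _ hcop
    rw [and_iff_right hdvd, nsmul_eq_mul, ← hunit]
    exact (IsUnit.of_mul_eq_one _ hunit).mul_right_inj
  have card_eq := card_filter_fiber_sum_eq (Quotient.mk_surjective (s := Perm.SameCycle.setoid π))
    fun q : CycleClass π => ((k / #q.points : ℕ) : ZMod ℓ)⁻¹
  rw [ZMod.card] at card_eq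
  exact (congrArg card (filter_congr fun v _ => pow_eq_iff v)).trans card_eq

theorem sum_sign_wreathPerm_pow_eq (k ℓ : ℕ) [NeZero ℓ] (π : Perm β) :
    ∑ v : β → ZMod ℓ with wreathPerm π v ^ k = wreathPerm 1 1, (Perm.sign (wreathPerm π v) : ℤ) =
      ((fullCycleType π).map (cycleWeight k ℓ)).prod := by
  rw [prod_map_fullCycleType, sum_congr rfl fun v hv => sign_wreathPerm_of_isUnit
    (isUnit_sum_points_of_wreathPerm_pow_eq (mem_filter.1 hv).2), sum_const, nsmul_eq_mul]
  by_cases hπ : ∀ q : CycleClass π, #q.points ∈ Gset k ℓ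
  · rw [card_wreathPerm_pow_eq hπ, mul_comm]
    push_cast
    rw [← prod_mul_distrib]
    exact prod_congr rfl fun q _ => (cycleWeight_of_mem (hπ q)).symm
  · have no_root : ({v : β → ZMod ℓ | wreathPerm π v ^ k = wreathPerm 1 1} : Finset _) = ∅ :=
      filter_eq_empty_iff.2 fun v _ hv => hπ (card_points_mem_Gset_of_wreathPerm_pow_eq hv)
    obtain ⟨q, hq⟩ := not_forall.1 hπ
    rw [no_root, card_empty, Nat.cast_zero, zero_mul]
    exact (prod_eq_zero (mem_univ q) (cycleWeight_of_notMem hq)).symm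

end Roots

section SignedRootCount

variable {α β : Type*} [Fintype α] [DecidableEq α] [Fintype β] [DecidableEq β]

/-- The sum of the signs of the `k`th roots of `σ`, that is, `re_k(σ) - ro_k(σ)`. -/
def signedRootCount (k : ℕ) (σ : Perm α) : ℤ := ∑ τ with τ ^ k = σ, (Perm.sign τ : ℤ)

theorem nEvenRoots_sub_nOddRoots (k : ℕ) (σ : Perm α) :
    (nEvenRoots k σ - nOddRoots k σ : ℤ) = signedRootCount k σ := by
  rw [nEvenRoots, nOddRoots, signedRootCount, ← filter_filter, ← filter_filter, card_filter,
    card_filter]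
  push_cast
  rw [← sum_sub_distrib]
  refine sum_congr rfl fun τ _ => ?_
  obtain h | h := Int.units_eq_one_or (Perm.sign τ) <;> simp [h]

theorem signedRootCount_permCongr (e : α ≃ β) (k : ℕ) (σ : Perm α) :
    signedRootCount k (e.permCongr σ) = signedRootCount k σ := by
  refine (sum_equiv e.permCongr (fun τ => ?_) fun τ _ => ?_).symm
  · rw [mem_filter_univ, mem_filter_univ, ← e.permCongr.apply_eq_iff_eq]
    exact Eq.congr_left (map_pow e.permCongrHom τ k)
  · rw [Perm.sign_permCongr]

theorem signedRootCount_wreathPerm_one (k ℓ : ℕ) [NeZero ℓ] :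
    signedRootCount k (wreathPerm 1 1 : Perm (ZMod ℓ × β)) =
      ∑ π : Perm β, ((fullCycleType π).map (cycleWeight k ℓ)).prod := by
  simp only [← sum_sign_wreathPerm_pow_eq]
  rw [signedRootCount, sum_sigma']
  refine (sum_nbij (fun p : (_ : Perm β) × (β → ZMod ℓ) => wreathPerm p.1 p.2) ?_ ?_ ?_ ?_).symm
  · exact fun p hp => (mem_filter_univ _).2 (mem_filter.1 (mem_sigma.1 hp).2).2
  · rintro ⟨π, v⟩ - ⟨ρ, u⟩ - h
    obtain ⟨rfl, rfl⟩ := wreathPerm_inj.1 h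
    rfl
  · intro τ hτ
    have root : τ ^ k = wreathPerm 1 1 := (mem_filter.1 hτ).2
    obtain ⟨π, v, rfl⟩ := exists_eq_wreathPerm_of_commute (root ▸ Commute.self_pow τ k)
    exact ⟨⟨π, v⟩, by simpa using root, rfl⟩
  · exact fun _ _ => rfl

end SignedRootCount

/-- **Lemma (fungen-lfijo, explicit form).** Fix positive integers `k, ℓ` and `c ≥ 0`. For
every permutation `σ` of a set of cardinality `ℓ·c` with cycle type `(ℓ)^c`,
`re_k(σ) − ro_k(σ)` equals the sum, over all functions `p : G_k(ℓ) → ℕ` with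
`∑_{g ∈ G_k(ℓ)} g·p(g) = c`, of
`c! · ∏_{g ∈ G_k(ℓ)} (−1)^{p(g)(ℓg+1)} ℓ^{p(g)(g−1)} / (g^{p(g)} p(g)!)`. -/
theorem signed_root_count_eq_sum {α : Type*} [Fintype α] [DecidableEq α]
    (k ℓ : ℕ) (hk : 0 < k) (hℓ : 0 < ℓ) (c : ℕ)
    (hcard : Fintype.card α = ℓ * c)
    (σ : Equiv.Perm α) (hσ : fullCycleType σ = Multiset.replicate c ℓ) :
    (nEvenRoots k σ : ℚ) - (nOddRoots k σ : ℚ)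
      = ∑ᶠ p : {p : Gset k ℓ → ℕ // (∑ᶠ g : Gset k ℓ, (g : ℕ) * p g) = c},
          (c.factorial : ℚ) *
            ∏ᶠ g : Gset k ℓ,
              (-1 : ℚ) ^ (p.1 g * (ℓ * (g : ℕ) + 1)) * (ℓ : ℚ) ^ (p.1 g * ((g : ℕ) - 1)) /
                (((g : ℕ) : ℚ) ^ (p.1 g) * ((p.1 g).factorial : ℚ)) := by
  have : NeZero ℓ := ⟨hℓ.ne'⟩
  obtain ⟨e, he⟩ := exists_permCongr_eq_wreathPerm_one σ
    (card_points_of_fullCycleType_eq_replicate hσ)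
  have weight_eq_zero : ∀ g ∉ Gset k ℓ, (cycleWeight k ℓ g : ℚ) = 0 := fun g hg => by
    rw [cycleWeight_of_notMem hg, Int.cast_zero]
  have weight_pow (g : Gset k ℓ) (n : ℕ) : (cycleWeight k ℓ g : ℚ) ^ n =
      (-1) ^ (n * (ℓ * g + 1)) * ℓ ^ (n * ((g : ℕ) - 1)) := by
    rw [cycleWeight_of_mem g.2]
    push_cast
    rw [mul_pow, pow_mul', pow_mul']
  have signed_count : (nEvenRoots k σ - nOddRoots k σ : ℚ) =
      ∑ π : Perm (CycleClass σ), ((fullCycleType π).map fun g => (cycleWeight k ℓ g : ℚ)).prod := by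
    have h := nEvenRoots_sub_nOddRoots k σ
    rw [← signedRootCount_permCongr e, he, signedRootCount_wreathPerm_one] at h
    simpa [Int.cast_multiset_prod] using congrArg (Int.cast : ℤ → ℚ) h
  rw [signed_count, sum_prod_map_fullCycleType_eq_finsum (finite_Gset hk ℓ) (fun _ hg => hg.1)
    weight_eq_zero, card_cycleClass_of_fullCycleType_eq_replicate hσ]
  simp only [weight_pow]
end
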